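/- Any two maximal caps in AG(4,3) with anchor equal to the zero vector are linearly equivalent: there is a linear automorphism T of (Fin 4 → ZMod 3) mapping one onto the other. -/

import Mathlib

/-- A cap in `AG(n,3)`: a finite set of points of `Fin n → ZMod 3` containing no
three distinct collinear points (three distinct points are collinear iff they sum to zero). -/
def IsCap {n : ℕ} (C : Finset (Fin n → ZMod 3)) : Prop :=
  ∀ x ∈ C, ∀ y ∈ C, ∀ z ∈ C, x ≠ y → x ≠ z → y ≠ z → x + y + z ≠ 0

/-- A maximal cap: a cap of largest possible size. -/
def MaximalCap {n : ℕ} (C : Finset (Fin n → ZMod 3)) : Prop :=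
  IsCap C ∧ ∀ D : Finset (Fin n → ZMod 3), IsCap D → D.card ≤ C.card

/-!
Counting pairs and triples of points in all hyperplane sections shows that caps in `AG(2,3)` and
`AG(3,3)` have at most `4` and `9` points, that the `9`-point caps are elliptic paraboloids, and
that every `20`-point cap in `AG(4,3)` has three parallel sections of sizes `2, 9, 9`. Let `p, q` be
the two points. If neither paraboloid had the direction of `pq` as its axis direction, some
hyperplane through `p` and `q` would meet both of them in at least four points and so contain ten
points of the cap. Hence one axis is parallel to `pq`, and avoiding lines forces the other
paraboloid to be the image of this one under `x ↦ p + q - x`. So a maximal cap is determined, up to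
translation by its anchor, by the vertex and the three directions of one paraboloid, which form a
basis.
-/

open Finset

/-- The affine space `AG(n,3)`, identified with its vectors. -/
abbrev AG (n : ℕ) := Fin n → ZMod 3

/-- The section of `C` by the hyperplane `y ⬝ᵥ x = i`; for `y = 0` it is `C` or empty. -/
def hyperplaneSection {n : ℕ} (C : Finset (AG n)) (y : AG n) (i : ZMod 3) : Finset (AG n) :=
  {x ∈ C | y ⬝ᵥ x = i}

theorem eq_or_eq_add_one_or_eq_sub_one : ∀ i j : ZMod 3, j = i ∨ j = i + 1 ∨ j = i - 1 := by
  decide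

section Caps

variable {n m : ℕ} {C D : Finset (AG n)} {y x : AG n} {i : ZMod 3}

@[simp]
theorem mem_hyperplaneSection : x ∈ hyperplaneSection C y i ↔ x ∈ C ∧ y ⬝ᵥ x = i := mem_filter

theorem sum_card_hyperplaneSection (C : Finset (AG n)) (y : AG n) :
    ∑ i, #(hyperplaneSection C y i) = #C :=
  (card_eq_sum_card_fiberwise fun _ _ => mem_coe.2 (mem_univ _)).symm

theorem add_add_self_eq_zero (x : AG n) : x + x + x = 0 := by
  have h := ZModModule.char_nsmul_eq_zero 3 x
  rwa [succ_nsmul, two_nsmul] at h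

theorem IsCap.subset (hC : IsCap C) (h : D ⊆ C) : IsCap D :=
  fun x hx y hy z hz => hC x (h hx) y (h hy) z (h hz)

theorem map_add_map_add_map (φ : AG m →ᵃ[ZMod 3] AG n) (a b c : AG m) :
    φ a + φ b + φ c = φ.linear (a + b + c) := by
  have h x : φ x = φ.linear x + φ 0 := congrFun φ.decomp x
  rw [h a, h b, h c, map_add, map_add]
  linear_combination add_add_self_eq_zero (φ 0)

theorem IsCap.filter_map_mem (hC : IsCap C) {φ : AG m →ᵃ[ZMod 3] AG n}
    (hφ : Function.Injective φ) : IsCap ({x | φ x ∈ C} : Finset (AG m)) := by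
  intro a ha b hb c hc hab hac hbc h
  rw [mem_filter_univ] at ha hb hc
  refine hC _ ha _ hb _ hc (hφ.ne hab) (hφ.ne hac) (hφ.ne hbc) ?_
  rw [map_add_map_add_map, h, map_zero]

theorem exists_dotProduct_eq (hy : y ≠ 0) (i : ZMod 3) : ∃ x, y ⬝ᵥ x = i := by
  obtain ⟨j, hj⟩ := Function.ne_iff.1 hy
  refine ⟨Pi.single j ((y j)⁻¹ * i), ?_⟩
  rw [dotProduct_single, mul_inv_cancel_left₀ hj]

theorem finrank_ker_dotProductBilin {y : AG (n + 1)} (hy : y ≠ 0) :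
    Module.finrank (ZMod 3) (dotProductBilin (ZMod 3) (ZMod 3) y).ker = n := by
  have hsurj : Function.Surjective (dotProductBilin (ZMod 3) (ZMod 3) y) :=
    exists_dotProduct_eq hy
  have h := (dotProductBilin (ZMod 3) (ZMod 3) y).finrank_range_add_finrank_ker
  rw [LinearMap.range_eq_top.2 hsurj, finrank_top, Module.finrank_self,
    Module.finrank_fin_fun] at h
  omega

theorem exists_affineMap_range_eq_hyperplane {y : AG (n + 1)} (hy : y ≠ 0) (i : ZMod 3) :
    ∃ φ : AG n →ᵃ[ZMod 3] AG (n + 1), Function.Injective φ ∧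
      ∀ x, x ∈ Set.range φ ↔ y ⬝ᵥ x = i := by
  obtain ⟨w, hw⟩ := exists_dotProduct_eq hy i
  let e : AG n ≃ₗ[ZMod 3] (dotProductBilin (ZMod 3) (ZMod 3) y).ker :=
    LinearEquiv.ofFinrankEq _ _ (by rw [finrank_ker_dotProductBilin hy, Module.finrank_fin_fun])
  refine ⟨((Submodule.subtype _).comp e.toLinearMap).toAffineMap + AffineMap.const _ _ w,
    fun a b h => e.injective (Subtype.ext (add_right_cancel h)), fun x => ⟨?_, fun hx => ?_⟩⟩
  · rintro ⟨a, rfl⟩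
    have ha : y ⬝ᵥ (e a : AG (n + 1)) = 0 := (e a).2
    simp [dotProduct_add, ha, hw]
  · have hxw : y ⬝ᵥ (x - w) = 0 := by rw [dotProduct_sub, hx, hw, sub_self]
    exact ⟨e.symm ⟨x - w, hxw⟩, by simp⟩

theorem IsCap.exists_image_eq_hyperplaneSection {C : Finset (AG (n + 1))} (hC : IsCap C)
    {y : AG (n + 1)} (hy : y ≠ 0) (i : ZMod 3) :
    ∃ (φ : AG n →ᵃ[ZMod 3] AG (n + 1)) (D : Finset (AG n)), Function.Injective φ ∧ IsCap D ∧
      D.image φ = hyperplaneSection C y i := by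
  obtain ⟨φ, hφ, hrange⟩ := exists_affineMap_range_eq_hyperplane hy i
  refine ⟨φ, ({x | φ x ∈ C} : Finset (AG n)), hφ, hC.filter_map_mem hφ, ?_⟩
  ext x
  simp only [mem_image, mem_filter_univ, mem_hyperplaneSection, ← hrange, Set.mem_range]
  grind

end Caps

section DoubleCounting

variable {n k m : ℕ} {C : Finset (AG n)}

theorem card_filter_dotProduct_eq_zero {v : Fin k → AG (n + k)}
    (hv : LinearIndependent (ZMod 3) v) :
    #{y : AG (n + k) | ∀ j, v j ⬝ᵥ y = 0} = 3 ^ n := by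
  have hker : Module.finrank (ZMod 3) (Matrix.of v).mulVecLin.ker = n := by
    have h := (Matrix.of v).mulVecLin.finrank_range_add_finrank_ker
    have hrank : (Matrix.of v).rank = k := hv.rank_matrix.trans (Fintype.card_fin k)
    rw [Matrix.rank] at hrank
    rw [hrank, Module.finrank_fin_fun] at h
    omega
  have hcard := Module.natCard_eq_pow_finrank (K := ZMod 3) (V := (Matrix.of v).mulVecLin.ker)
  rw [hker, Nat.card_zmod] at hcard
  rw [← hcard, ← Fintype.card_subtype, ← Nat.card_eq_fintype_card]
  refine Nat.card_congr (Equiv.subtypeEquivRight fun y => ?_)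
  simp only [LinearMap.mem_ker, Matrix.mulVecLin_apply, funext_iff]
  rfl

theorem sum_choose_card_hyperplaneSection (hk : k ≠ 0) (y : AG n) :
    ∑ i, (#(hyperplaneSection C y i)).choose k =
      #{T ∈ C.powersetCard k | ∃ i, ∀ x ∈ T, y ⬝ᵥ x = i} := by
  have hunion : {T ∈ C.powersetCard k | ∃ i, ∀ x ∈ T, y ⬝ᵥ x = i} =
      univ.biUnion fun i => (hyperplaneSection C y i).powersetCard k := by
    ext T
    simp only [mem_filter, mem_powersetCard, mem_biUnion, mem_univ, true_and, subset_iff,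
      mem_hyperplaneSection]
    constructor
    · rintro ⟨⟨hTC, hcard⟩, i, hi⟩
      exact ⟨i, fun x hx => ⟨hTC hx, hi x hx⟩, hcard⟩
    · rintro ⟨i, hi, hcard⟩
      exact ⟨⟨fun x hx => (hi hx).1, hcard⟩, i, fun x hx => (hi hx).2⟩
  rw [hunion, card_biUnion, sum_congr rfl fun i _ => (card_powersetCard k _).symm]
  refine fun i _ j _ hij => disjoint_left.2 fun T hTi hTj => hij ?_
  rw [mem_powersetCard] at hTi hTj
  obtain ⟨x, hx⟩ := card_ne_zero.1 (hTi.2 ▸ hk)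
  exact (mem_hyperplaneSection.1 (hTi.1 hx)).2.symm.trans (mem_hyperplaneSection.1 (hTj.1 hx)).2

theorem sum_choose_card_hyperplaneSection_zero (hk : k ≠ 0) :
    ∑ i, (#(hyperplaneSection C 0 i)).choose k = (#C).choose k := by
  rw [sum_choose_card_hyperplaneSection hk, filter_true_of_mem, card_powersetCard]
  exact fun T _ => ⟨0, fun x _ => zero_dotProduct x⟩

theorem sum_erase_zero_choose_card_hyperplaneSection (hk : k ≠ 0)
    (hm : ∀ T ∈ C.powersetCard k, #{y : AG n | ∃ i, ∀ x ∈ T, y ⬝ᵥ x = i} = m) :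
    ∑ y ∈ univ.erase 0, ∑ i, (#(hyperplaneSection C y i)).choose k + (#C).choose k =
      (#C).choose k * m := by
  calc
    _ = ∑ y : AG n, #{T ∈ C.powersetCard k | ∃ i, ∀ x ∈ T, y ⬝ᵥ x = i} := by
      rw [← sum_choose_card_hyperplaneSection_zero hk, sum_erase_add _ _ (mem_univ _)]
      exact sum_congr rfl fun y _ => sum_choose_card_hyperplaneSection hk y
    _ = ∑ T ∈ C.powersetCard k, #{y : AG n | ∃ i, ∀ x ∈ T, y ⬝ᵥ x = i} :=
      sum_card_bipartiteAbove_eq_sum_card_bipartiteBelow _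
    _ = (#C).choose k * m := by
      rw [sum_congr rfl hm, sum_const, card_powersetCard, smul_eq_mul]

theorem card_filter_constant_pair {a b : AG (n + 1)} (hab : a ≠ b) :
    #{y : AG (n + 1) | ∃ i, ∀ x ∈ ({a, b} : Finset (AG (n + 1))), y ⬝ᵥ x = i} = 3 ^ n := by
  have hv : LinearIndependent (ZMod 3) ![b - a] :=
    LinearIndependent.of_subsingleton 0 (sub_ne_zero.2 hab.symm)
  rw [← card_filter_dotProduct_eq_zero hv]
  congr 1 with y
  simp [dotProduct_comm _ y, sub_eq_zero, forall_eq_or_imp]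

theorem linearIndependent_sub_sub {a b c : AG n} (hab : a ≠ b) (hac : a ≠ c) (hbc : b ≠ c)
    (h : a + b + c ≠ 0) : LinearIndependent (ZMod 3) ![b - a, c - a] := by
  refine (LinearIndependent.pair_iff' (sub_ne_zero.2 hab.symm)).2 fun s hs => ?_
  rcases eq_or_eq_add_one_or_eq_sub_one 0 s with rfl | rfl | rfl <;>
    simp only [zero_add, zero_sub, zero_smul, one_smul, neg_smul] at hs
  · exact hac (by linear_combination hs)
  · exact hbc (by linear_combination hs)
  · exact h (by linear_combination add_add_self_eq_zero a - hs)

theorem card_filter_constant_triple {a b c : AG (n + 2)} (hab : a ≠ b) (hac : a ≠ c)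
    (hbc : b ≠ c) (h : a + b + c ≠ 0) :
    #{y : AG (n + 2) | ∃ i, ∀ x ∈ ({a, b, c} : Finset (AG (n + 2))), y ⬝ᵥ x = i} = 3 ^ n := by
  rw [← card_filter_dotProduct_eq_zero (linearIndependent_sub_sub hab hac hbc h)]
  congr 1 with y
  simp [dotProduct_comm _ y, sub_eq_zero, forall_eq_or_imp]

theorem sum_erase_zero_choose_two (C : Finset (AG (n + 1))) :
    ∑ y ∈ univ.erase 0, ∑ i, (#(hyperplaneSection C y i)).choose 2 + (#C).choose 2 =
      (#C).choose 2 * 3 ^ n := by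
  refine sum_erase_zero_choose_card_hyperplaneSection two_ne_zero fun T hT => ?_
  obtain ⟨a, b, hab, rfl⟩ := card_eq_two.1 (mem_powersetCard.1 hT).2
  exact card_filter_constant_pair hab

theorem IsCap.sum_erase_zero_choose_three {C : Finset (AG (n + 2))} (hC : IsCap C) :
    ∑ y ∈ univ.erase 0, ∑ i, (#(hyperplaneSection C y i)).choose 3 + (#C).choose 3 =
      (#C).choose 3 * 3 ^ n := by
  refine sum_erase_zero_choose_card_hyperplaneSection three_ne_zero fun T hT => ?_
  obtain ⟨hTC, hT3⟩ := mem_powersetCard.1 hT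
  obtain ⟨a, b, c, hab, hac, hbc, rfl⟩ := card_eq_three.1 hT3
  exact card_filter_constant_triple hab hac hbc
    (hC a (hTC (by simp)) b (hTC (by simp)) c (hTC (by simp)) hab hac hbc)

end DoubleCounting

section Bounds

variable {n b : ℕ}

theorem exists_lt_sum_choose_two {C : Finset (AG (n + 1))}
    (h : (3 ^ (n + 1) - 1) * b < (#C).choose 2 * (3 ^ n - 1)) :
    ∃ y ≠ 0, b < ∑ i, (#(hyperplaneSection C y i)).choose 2 := by
  have hsum := sum_erase_zero_choose_two C
  have hcard : #((univ : Finset (AG (n + 1))).erase 0) = 3 ^ (n + 1) - 1 := by simp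
  suffices hlt : ∑ _y ∈ (univ : Finset (AG (n + 1))).erase 0, b <
      ∑ y ∈ univ.erase 0, ∑ i, (#(hyperplaneSection C y i)).choose 2 by
    obtain ⟨y, hy, hby⟩ := exists_lt_of_sum_lt hlt
    exact ⟨y, ne_of_mem_erase hy, hby⟩
  rw [sum_const, hcard, smul_eq_mul]
  rw [Nat.mul_sub_one] at h
  omega

theorem IsCap.card_hyperplaneSection_le (hb : ∀ D : Finset (AG n), IsCap D → #D ≤ b)
    {C : Finset (AG (n + 1))} (hC : IsCap C) {y : AG (n + 1)} (hy : y ≠ 0) (i : ZMod 3) :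
    #(hyperplaneSection C y i) ≤ b := by
  obtain ⟨φ, D, hφ, hD, hDC⟩ := hC.exists_image_eq_hyperplaneSection hy i
  rw [← hDC, card_image_of_injective _ hφ]
  exact hb D hD

theorem of_forall_fin {ι : Type*} {P : (ι → ℕ) → Prop} (h : ∀ g : ι → Fin (b + 1), P fun j => g j)
    {f : ι → ℕ} (hf : ∀ j, f j ≤ b) : P f :=
  h fun j => ⟨f j, Nat.lt_succ_of_le (hf j)⟩

theorem IsCap.card_le_two {C : Finset (AG 1)} (hC : IsCap C) : #C ≤ 2 := by
  by_contra! h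
  obtain rfl : C = univ := eq_univ_of_card C (le_antisymm (card_le_univ C) (show 3 ≤ #C from h))
  exact hC 0 (mem_univ _) 1 (mem_univ _) (-1) (mem_univ _) (by decide) (by decide) (by decide)
    (by decide)

theorem IsCap.card_le_four {C : Finset (AG 2)} (hC : IsCap C) : #C ≤ 4 := by
  by_contra! h
  obtain ⟨D, hDC, hD⟩ := exists_subset_card_eq h
  obtain ⟨y, hy, hpairs⟩ := exists_lt_sum_choose_two (C := D) (b := 2) (by rw [hD]; decide)
  refine of_forall_fin (P := fun f => ∑ i, f i = 5 → ∑ i, (f i).choose 2 ≤ 2)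
    (by decide) ((hC.subset hDC).card_hyperplaneSection_le (fun _ => IsCap.card_le_two) hy)
    ?_ |>.not_gt hpairs
  rw [sum_card_hyperplaneSection, hD]

theorem IsCap.card_le_nine {C : Finset (AG 3)} (hC : IsCap C) : #C ≤ 9 := by
  by_contra! h
  obtain ⟨D, hDC, hD⟩ := exists_subset_card_eq h
  obtain ⟨y, hy, hpairs⟩ := exists_lt_sum_choose_two (C := D) (b := 13) (by rw [hD]; decide)
  refine of_forall_fin (P := fun f => ∑ i, f i = 10 → ∑ i, (f i).choose 2 ≤ 13)
    (by decide +kernel)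
    ((hC.subset hDC).card_hyperplaneSection_le (fun _ => IsCap.card_le_four) hy) ?_ |>.not_gt hpairs
  rw [sum_card_hyperplaneSection, hD]

theorem IsCap.exists_sections_one_four_four {C : Finset (AG 3)} (hC : IsCap C) (h : #C = 9) :
    ∃ y ≠ 0, ∃ i, #(hyperplaneSection C y i) = 1 ∧ #(hyperplaneSection C y (i + 1)) = 4 ∧
      #(hyperplaneSection C y (i - 1)) = 4 := by
  obtain ⟨y, hy, hpairs⟩ := exists_lt_sum_choose_two (C := C) (b := 11) (by rw [h]; decide)
  refine ⟨y, hy, of_forall_fin (P := fun f => ∑ i, f i = 9 → 11 < ∑ i, (f i).choose 2 →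
    ∃ i, f i = 1 ∧ f (i + 1) = 4 ∧ f (i - 1) = 4) (by decide +kernel)
    (hC.card_hyperplaneSection_le (fun _ => IsCap.card_le_four) hy) ?_ hpairs⟩
  rw [sum_card_hyperplaneSection, h]

theorem IsCap.exists_sections_two_nine_nine {C : Finset (AG 4)} (hC : IsCap C) (h : #C = 20) :
    ∃ y ≠ 0, ∃ i, #(hyperplaneSection C y i) = 2 ∧ #(hyperplaneSection C y (i + 1)) = 9 ∧
      #(hyperplaneSection C y (i - 1)) = 9 := by
  have hpairs : ∑ y ∈ (univ : Finset (AG 4)).erase 0,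
      ∑ i, (#(hyperplaneSection C y i)).choose 2 + (#C).choose 2 = (#C).choose 2 * 3 ^ 3 :=
    sum_erase_zero_choose_two C
  have htriples : ∑ y ∈ (univ : Finset (AG 4)).erase 0,
      ∑ i, (#(hyperplaneSection C y i)).choose 3 + (#C).choose 3 = (#C).choose 3 * 3 ^ 2 :=
    hC.sum_erase_zero_choose_three
  rw [h] at hpairs htriples
  have hcard : #((univ : Finset (AG 4)).erase 0) = 80 := by simp
  -- Among sizes at most `9` with sum `20`, only `2, 9, 9` has `51 pairs - 10 triples > 2007`.
  have hlt : ∑ y ∈ (univ : Finset (AG 4)).erase 0,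
      (10 * ∑ i, (#(hyperplaneSection C y i)).choose 3 + 2007) <
      ∑ y ∈ univ.erase 0, 51 * ∑ i, (#(hyperplaneSection C y i)).choose 2 := by
    rw [sum_add_distrib, sum_const, hcard, ← mul_sum, ← mul_sum]
    norm_num [Nat.choose] at hpairs htriples ⊢
    omega
  obtain ⟨y, hy_mem, hy_pairs⟩ := exists_lt_of_sum_lt hlt
  have hy := ne_of_mem_erase hy_mem
  refine ⟨y, hy, of_forall_fin (P := fun f => ∑ i, f i = 20 →
    10 * ∑ i, (f i).choose 3 + 2007 < 51 * ∑ i, (f i).choose 2 →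
    ∃ i, f i = 2 ∧ f (i + 1) = 9 ∧ f (i - 1) = 9) (by decide +kernel)
    (hC.card_hyperplaneSection_le (fun _ => IsCap.card_le_nine) hy) ?_ hy_pairs⟩
  rw [sum_card_hyperplaneSection, h]

end Bounds

section PlaneCaps

variable {n k : ℕ} {y x : AG n}

theorem span_range_le_ker_dotProductBilin {b : Fin k → AG n} (hyb : ∀ j, y ⬝ᵥ b j = 0) :
    Submodule.span (ZMod 3) (Set.range b) ≤ (dotProductBilin (ZMod 3) (ZMod 3) y).ker :=
  Submodule.span_le.2 (Set.range_subset_iff.2 hyb)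

theorem linearIndependent_vecCons_of_dotProduct {b : Fin k → AG n}
    (hb : LinearIndependent (ZMod 3) b) (hyb : ∀ j, y ⬝ᵥ b j = 0) (hyx : y ⬝ᵥ x ≠ 0) :
    LinearIndependent (ZMod 3) (Matrix.vecCons x b) := by
  exact linearIndependent_finCons.2 ⟨hb, fun hx => hyx (span_range_le_ker_dotProductBilin hyb hx)⟩

theorem exists_sum_smul_eq_of_dotProduct_eq_zero {y x : AG (n + 1)} {b : Fin n → AG (n + 1)}
    (hb : LinearIndependent (ZMod 3) b) (hyb : ∀ j, y ⬝ᵥ b j = 0) (hy : y ≠ 0)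
    (hyx : y ⬝ᵥ x = 0) : ∃ a : Fin n → ZMod 3, ∑ j, a j • b j = x := by
  have heq := Submodule.eq_of_le_of_finrank_eq (span_range_le_ker_dotProductBilin hyb) (by
    rw [finrank_span_eq_card hb, finrank_ker_dotProductBilin hy, Fintype.card_fin])
  exact Submodule.mem_span_range_iff_exists_fun _ |>.1 (heq ▸ hyx)

theorem IsCap.neg_add_notMem {C : Finset (AG n)} (hC : IsCap C) {a b : AG n} (ha : a ∈ C)
    (hb : b ∈ C) (hab : a ≠ b) : -(a + b) ∉ C := by
  refine fun h => hC a ha b hb _ h hab ?_ ?_ (by abel)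
  · exact fun h => hab (by linear_combination add_add_self_eq_zero a - h)
  · exact fun h => hab (by linear_combination h - add_add_self_eq_zero b)

theorem IsCap.exists_pairs_add_eq {C : Finset (AG 2)} (hC : IsCap C) (h : #C = 4) :
    ∃ a b a' b', C = {a, b, a', b'} ∧ a ≠ b ∧ a ≠ a' ∧ a' ≠ b ∧ a + b = a' + b' := by
  have hcompl : #(univ \ C) < #(C.powersetCard 2) := by
    rw [card_powersetCard, card_univ_sdiff, h]
    decide
  obtain ⟨T, hT, T', hT', hTT', hsum⟩ := exists_ne_map_eq_of_card_lt_of_maps_to hcompl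
    (f := fun T => -∑ x ∈ T, x) fun T hT => by
      obtain ⟨hTC, hT⟩ := mem_powersetCard.1 hT
      obtain ⟨a, b, hab, rfl⟩ := card_eq_two.1 hT
      simpa [sum_pair hab] using hC.neg_add_notMem (hTC (by simp)) (hTC (by simp)) hab
  obtain ⟨hTC, hT⟩ := mem_powersetCard.1 hT
  obtain ⟨hTC', hT'⟩ := mem_powersetCard.1 hT'
  obtain ⟨a, b, hab, rfl⟩ := card_eq_two.1 hT
  obtain ⟨a', b', hab', rfl⟩ := card_eq_two.1 hT'
  rw [sum_pair hab, sum_pair hab', neg_inj] at hsum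
  have haa' : a ≠ a' := by grind
  have ha'b : a' ≠ b := by grind
  have hab'' : a ≠ b' := by grind
  have hbb' : b ≠ b' := by grind
  refine ⟨a, b, a', b', (eq_of_subset_of_card_le ?_ ?_).symm, hab, haa', ha'b, hsum⟩
  · grind
  · rw [h]
    simp [*, ha'b.symm]

theorem IsCap.exists_eq_pairs_of_card_eq_four {C : Finset (AG 2)} (hC : IsCap C) (h : #C = 4) :
    ∃ m u v, LinearIndependent (ZMod 3) ![u, v] ∧ C = {m + u, m - u, m + v, m - v} := by
  obtain ⟨a, b, a', b', rfl, hab, haa', ha'b, hsum⟩ := hC.exists_pairs_add_eq h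
  have hm := hC.neg_add_notMem (a := a) (b := b) (by simp) (by simp) hab
  refine ⟨-(a + b), a - -(a + b), a' - -(a + b), linearIndependent_sub_sub
    (ne_of_mem_of_not_mem (by simp) hm).symm (ne_of_mem_of_not_mem (by simp) hm).symm haa'
    fun h => ha'b (by linear_combination h), ?_⟩
  have hb : -(a + b) - (a - -(a + b)) = b := by
    linear_combination -add_add_self_eq_zero a - add_add_self_eq_zero b
  have hb' : -(a + b) - (a' - -(a + b)) = b' := by
    linear_combination -2 * hsum - add_add_self_eq_zero a' - add_add_self_eq_zero b'
  rw [add_sub_cancel, add_sub_cancel, hb, hb']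

end PlaneCaps

/-- The graph of `s ^ 2 + t ^ 2` over the plane through `c` spanned by `u` and `v`, with vertex `c`
and axis direction `f`. -/
def paraboloid {n : ℕ} (c f u v : AG n) : Finset (AG n) :=
  univ.image fun w : ZMod 3 × ZMod 3 => c + w.1 • u + w.2 • v + (w.1 ^ 2 + w.2 ^ 2) • f

section Paraboloid

variable {n m : ℕ} {c f u v x : AG n}

theorem mem_paraboloid :
    x ∈ paraboloid c f u v ↔
      ∃ s t : ZMod 3, c + s • u + t • v + (s ^ 2 + t ^ 2) • f = x := by
  simp [paraboloid]

theorem paraboloid_eq_insert_union (c f u v : AG n) :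
    paraboloid c f u v =
      insert c ({c + f + u, c + f - u, c + f + v, c + f - v} ∪
        {c - f + (u + v), c - f - (u + v), c - f + (u - v), c - f - (u - v)}) := by
  have huniv : (univ : Finset (ZMod 3 × ZMod 3)) =
      {(0, 0), (1, 0), (-1, 0), (0, 1), (0, -1), (1, 1), (-1, -1), (1, -1), (-1, 1)} := by decide
  have hneg : (1 + 1 : ZMod 3) = -1 := by decide
  simp only [paraboloid, huniv, image_insert, image_singleton, insert_union, singleton_union]
  iterate 8 refine congrArg₂ insert (by simp [hneg] <;> abel) ?_
  exact congrArg singleton (by simp [hneg]; abel)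

theorem card_paraboloid_le (c f u v : AG n) : #(paraboloid c f u v) ≤ 9 :=
  card_image_le

theorem affineMap_add (φ : AG n →ᵃ[ZMod 3] AG m) (a x : AG n) : φ (a + x) = φ a + φ.linear x := by
  rw [add_comm, ← vadd_eq_add, φ.map_vadd, vadd_eq_add, add_comm]

theorem image_paraboloid (φ : AG n →ᵃ[ZMod 3] AG m) (c f u v : AG n) :
    (paraboloid c f u v).image φ =
      paraboloid (φ c) (φ.linear f) (φ.linear u) (φ.linear v) := by
  rw [paraboloid, paraboloid, image_image]
  congr 1
  funext w
  simp only [Function.comp_apply, affineMap_add, map_smul]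

theorem linearIndependent_linear_comp {k : ℕ} {φ : AG n →ᵃ[ZMod 3] AG m}
    (hφ : Function.Injective φ) {b : Fin k → AG n} (hb : LinearIndependent (ZMod 3) b) :
    LinearIndependent (ZMod 3) (φ.linear ∘ b) :=
  hb.map' _ (LinearMap.ker_eq_bot.2 ((AffineMap.linear_injective_iff φ).2 hφ))

theorem dotProduct_eq_and_eq_zero {y m r : AG n} {i : ZMod 3} (h : y ⬝ᵥ (m + r) = i)
    (h' : y ⬝ᵥ (m - r) = i) : y ⬝ᵥ m = i ∧ y ⬝ᵥ r = 0 := by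
  have hdec : ∀ i a b : ZMod 3, a + b = i → a - b = i → a = i ∧ b = 0 := by decide
  rw [dotProduct_add] at h
  rw [dotProduct_sub] at h'
  exact hdec _ _ _ h h'

theorem IsCap.exists_hyperplaneSection_eq_pairs {C : Finset (AG 3)} (hC : IsCap C) {y : AG 3}
    (hy : y ≠ 0) {i : ZMod 3} (h : #(hyperplaneSection C y i) = 4) :
    ∃ m u v, LinearIndependent (ZMod 3) ![u, v] ∧ y ⬝ᵥ m = i ∧ y ⬝ᵥ u = 0 ∧ y ⬝ᵥ v = 0 ∧
      hyperplaneSection C y i = {m + u, m - u, m + v, m - v} := by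
  obtain ⟨φ, D, hφ, hD, hDC⟩ := hC.exists_image_eq_hyperplaneSection hy i
  rw [← hDC, card_image_of_injective _ hφ] at h
  obtain ⟨m, u, v, huv, rfl⟩ := hD.exists_eq_pairs_of_card_eq_four h
  have hcomp : φ.linear ∘ ![u, v] = ![φ.linear u, φ.linear v] := (FinVec.map_eq _ _).symm
  have himage : hyperplaneSection C y i =
      {φ m + φ.linear u, φ m - φ.linear u, φ m + φ.linear v, φ m - φ.linear v} := by
    rw [← hDC]
    simp only [image_insert, image_singleton, sub_eq_add_neg, affineMap_add, map_neg]
  have hmem {x : AG 3} (hx : x ∈ hyperplaneSection C y i) : y ⬝ᵥ x = i :=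
    (mem_hyperplaneSection.1 hx).2
  obtain ⟨hm, hu⟩ := dotProduct_eq_and_eq_zero (m := φ m) (r := φ.linear u)
    (hmem (by simp [himage])) (hmem (by simp [himage]))
  obtain ⟨-, hv⟩ := dotProduct_eq_and_eq_zero (m := φ m) (r := φ.linear v)
    (hmem (by simp [himage])) (hmem (by simp [himage]))
  exact ⟨φ m, φ.linear u, φ.linear v, hcomp ▸ linearIndependent_linear_comp hφ huv, hm, hu, hv,
    himage⟩

theorem IsCap.center_notMem {C : Finset (AG n)} (hC : IsCap C) (h : 4 ≤ #C) {a p q : AG n}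
    (hp : p ≠ 0) (hq : q ≠ 0) (hCpq : C ⊆ {a, a + p, a - p, a + q, a - q}) : a ∉ C := by
  intro ha
  have hone {r : AG n} (hr : r ≠ 0) : ∃ b, ∀ x ∈ C, x = a + r ∨ x = a - r → x = b := by
    by_cases hmem : a + r ∈ C
    · refine ⟨a + r, fun x hx hxr => hxr.resolve_right ?_⟩
      rintro rfl
      refine hC.neg_add_notMem ha hmem (by simpa using hr) ?_
      convert hx using 1
      linear_combination -add_add_self_eq_zero a
    · refine ⟨a - r, fun x hx hxr => hxr.resolve_left ?_⟩
      rintro rfl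
      exact hmem hx
  obtain ⟨b, hb⟩ := hone hp
  obtain ⟨b', hb'⟩ := hone hq
  have hsub : C ⊆ {a, b, b'} := by grind
  have := (card_le_card hsub).trans card_le_three
  omega

end Paraboloid

section NineCaps

theorem IsCap.hyperplaneSection_subset_corners {C : Finset (AG 3)} (hC : IsCap C) {y c f u v : AG 3}
    (hf : y ⬝ᵥ f = 1) (hu : y ⬝ᵥ u = 0) (hv : y ⬝ᵥ v = 0) (huv : LinearIndependent (ZMod 3) ![u, v])
    (hc : c ∈ C) (hpairs : {c + f + u, c + f - u, c + f + v, c + f - v} ⊆ C) :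
    hyperplaneSection C y (y ⬝ᵥ c - 1) ⊆
      {c - f, c - f + (u + v), c - f - (u + v), c - f + (u - v), c - f - (u - v)} := by
  intro x hx
  obtain ⟨hxC, hyx⟩ := mem_hyperplaneSection.1 hx
  have hy : y ≠ 0 := by
    rintro rfl
    simp at hf
  obtain ⟨a, ha⟩ := exists_sum_smul_eq_of_dotProduct_eq_zero (x := x - (c - f)) huv
    (by simp [Fin.forall_fin_two, hu, hv]) hy (by simp [dotProduct_sub, hyx, hf])
  have hline : ∀ r ∈ ({u, -u, v, -v} : Finset _), x ≠ c - f - r := by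
    rintro r hr rfl
    obtain ⟨hrC, hyr⟩ : c + f + r ∈ C ∧ y ⬝ᵥ r = 0 := by
      simp only [mem_insert, mem_singleton] at hr
      rcases hr with rfl | rfl | rfl | rfl <;>
        exact ⟨hpairs (by simp [sub_eq_add_neg]), by simp [hu, hv]⟩
    refine hC.neg_add_notMem hc hrC (fun h => ?_) ?_
    · simpa [dotProduct_add, hf, hyr] using congrArg (y ⬝ᵥ ·) h
    · convert hxC using 1
      linear_combination -add_add_self_eq_zero c
  simp only [mem_insert, mem_singleton, forall_eq_or_imp, forall_eq, sub_neg_eq_add] at hline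
  obtain ⟨s, t, hst⟩ : ∃ s t : ZMod 3, c - f + s • u + t • v = x :=
    ⟨a 0, a 1, by rw [add_assoc, ← eq_sub_iff_add_eq', ← ha, Fin.sum_univ_two]; rfl⟩
  clear * - hline hst
  simp only [mem_insert, mem_singleton]
  rcases eq_or_eq_add_one_or_eq_sub_one 0 s with rfl | rfl | rfl <;>
    rcases eq_or_eq_add_one_or_eq_sub_one 0 t with rfl | rfl | rfl <;>
    simp only [zero_add, zero_sub, zero_smul, one_smul, neg_smul] at hst <;> grind

theorem IsCap.exists_eq_paraboloid {C : Finset (AG 3)} (hC : IsCap C) (h : #C = 9) :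
    ∃ c f u v, LinearIndependent (ZMod 3) ![f, u, v] ∧ C = paraboloid c f u v := by
  obtain ⟨y, hy, i, hi, hi', hi''⟩ := hC.exists_sections_one_four_four h
  obtain ⟨c, hc⟩ := card_eq_one.1 hi
  obtain ⟨hcC, rfl⟩ := mem_hyperplaneSection.1 (hc ▸ mem_singleton_self c)
  obtain ⟨m, u, v, huv, hm, hu, hv, hpairs⟩ := hC.exists_hyperplaneSection_eq_pairs hy hi'
  obtain ⟨f, rfl⟩ : ∃ f, m = c + f := ⟨m - c, by abel⟩
  have hf : y ⬝ᵥ f = 1 := by simpa [dotProduct_add] using hm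
  have hcorners := hC.hyperplaneSection_subset_corners hf hu hv huv hcC
    (hpairs ▸ filter_subset _ _)
  have hindep := LinearIndependent.pair_iff.1 huv
  have hcenter : c - f ∉ hyperplaneSection C y (y ⬝ᵥ c - 1) :=
    IsCap.center_notMem (hC.subset (filter_subset _ _)) hi''.ge
      (fun h => by simpa using hindep 1 1 (by simpa using h))
      (fun h => by simpa using hindep 1 (-1) (by simpa [← sub_eq_add_neg] using h)) hcorners
  refine ⟨c, f, u, v, linearIndependent_vecCons_of_dotProduct huv
    (by simp [Fin.forall_fin_two, hu, hv]) (hf ▸ one_ne_zero), ?_⟩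
  refine eq_of_subset_of_card_le (fun x hx => ?_) ((card_paraboloid_le c f u v).trans_eq h.symm)
  rw [paraboloid_eq_insert_union, mem_insert, mem_union]
  rcases eq_or_eq_add_one_or_eq_sub_one (y ⬝ᵥ c) (y ⬝ᵥ x) with hyx | hyx | hyx <;>
    have hxC := mem_hyperplaneSection.2 ⟨hx, hyx⟩
  · exact Or.inl (mem_singleton.1 (hc ▸ hxC))
  · exact Or.inr (Or.inl (hpairs ▸ hxC))
  · exact Or.inr (Or.inr (mem_of_mem_insert_of_ne (hcorners hxC) fun hxc => hcenter (hxc ▸ hxC)))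

end NineCaps

section ParaboloidSections

variable {n : ℕ} {c f u v g d p q : AG n} {e : ZMod 3}

theorem card_eq_sum_card_hyperplaneSection (S : Finset (AG n)) (y : AG n) (i : ZMod 3)
    (he : e ≠ 0) :
    #S = #(hyperplaneSection S y i) +
      (#(hyperplaneSection S y (i + e)) + #(hyperplaneSection S y (i - e))) := by
  have huniv : (univ : Finset (ZMod 3)) = {i, i + e, i - e} ∧ i ∉ ({i + e, i - e} : Finset _) ∧
      i + e ∉ ({i - e} : Finset _) := by
    revert i e
    decide
  rw [← sum_card_hyperplaneSection S y, huniv.1, sum_insert huniv.2.1, sum_insert huniv.2.2,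
    sum_singleton]

theorem IsCap.exists_hyperplaneSection_eq_paraboloid {C : Finset (AG 4)} (hC : IsCap C) {y : AG 4}
    (hy : y ≠ 0) {i : ZMod 3} (h : #(hyperplaneSection C y i) = 9) :
    ∃ c f u v, LinearIndependent (ZMod 3) ![f, u, v] ∧ y ⬝ᵥ c = i ∧ y ⬝ᵥ f = 0 ∧ y ⬝ᵥ u = 0 ∧
      y ⬝ᵥ v = 0 ∧ hyperplaneSection C y i = paraboloid c f u v := by
  obtain ⟨φ, D, hφ, hD, hDC⟩ := hC.exists_image_eq_hyperplaneSection hy i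
  rw [← hDC, card_image_of_injective _ hφ] at h
  obtain ⟨c, f, u, v, hfuv, rfl⟩ := hD.exists_eq_paraboloid h
  have hcomp : φ.linear ∘ ![f, u, v] = ![φ.linear f, φ.linear u, φ.linear v] :=
    (FinVec.map_eq _ _).symm
  rw [image_paraboloid] at hDC
  have hmem {x : AG 4} (hx : x ∈ paraboloid (φ c) (φ.linear f) (φ.linear u) (φ.linear v)) :
      y ⬝ᵥ x = i := (mem_hyperplaneSection.1 (hDC ▸ hx)).2
  rw [paraboloid_eq_insert_union] at hmem
  have hc : y ⬝ᵥ φ c = i := hmem (by simp)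
  obtain ⟨hcf, hu⟩ := dotProduct_eq_and_eq_zero (m := φ c + φ.linear f) (r := φ.linear u)
    (hmem (by simp)) (hmem (by simp))
  obtain ⟨-, hv⟩ := dotProduct_eq_and_eq_zero (m := φ c + φ.linear f) (r := φ.linear v)
    (hmem (by simp)) (hmem (by simp))
  rw [dotProduct_add, hc, add_eq_left] at hcf
  exact ⟨φ c, φ.linear f, φ.linear u, φ.linear v, hcomp ▸ linearIndependent_linear_comp hφ hfuv,
    hc, hcf, hu, hv, hDC.symm⟩

theorem exists_four_le_card_hyperplaneSection_paraboloid (h : #(paraboloid c f u v) = 9)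
    (hg : g ⬝ᵥ f ≠ 0) :
    ∃ i, ∀ j ≠ i, 4 ≤ #(hyperplaneSection (paraboloid c f u v) g j) := by
  have hdec : ∀ α β γ δ : ZMod 3, δ ≠ 0 → ∃ i, ∀ j ≠ i,
      4 ≤ #{w : ZMod 3 × ZMod 3 | α + w.1 * β + w.2 * γ + (w.1 ^ 2 + w.2 ^ 2) * δ = j} := by
    decide
  obtain ⟨i, hi⟩ := hdec (g ⬝ᵥ c) (g ⬝ᵥ u) (g ⬝ᵥ v) (g ⬝ᵥ f) hg
  refine ⟨i, fun j hj => (hi j hj).trans_eq ?_⟩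
  have hinj := card_image_iff.1 (h.trans (by decide : 9 = #(univ : Finset (ZMod 3 × ZMod 3))))
  rw [hyperplaneSection, paraboloid, filter_image, card_image_of_injOn (hinj.mono (by simp))]
  simp [dotProduct_add]

theorem exists_dotProduct_eq_zero_and_ne_zero (h : f ∉ Submodule.span (ZMod 3) {d}) :
    ∃ g, g ⬝ᵥ d = 0 ∧ g ⬝ᵥ f ≠ 0 := by
  obtain ⟨l, hlf, hl⟩ := Submodule.exists_le_ker_of_notMem h
  obtain ⟨g, rfl⟩ := (dotProductEquiv (ZMod 3) (Fin n)).surjective l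
  exact ⟨g, hl (Submodule.mem_span_singleton_self d), hlf⟩

theorem exists_dotProduct_eq_zero_and_ne_zero_and_ne_zero {f' : AG n}
    (h : f ∉ Submodule.span (ZMod 3) {d}) (h' : f' ∉ Submodule.span (ZMod 3) {d}) :
    ∃ g, g ⬝ᵥ d = 0 ∧ g ⬝ᵥ f ≠ 0 ∧ g ⬝ᵥ f' ≠ 0 := by
  obtain ⟨g, hgd, hgf⟩ := exists_dotProduct_eq_zero_and_ne_zero h
  obtain ⟨g', hgd', hgf'⟩ := exists_dotProduct_eq_zero_and_ne_zero h'
  by_cases hf' : g ⬝ᵥ f' = 0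
  · by_cases hf : g' ⬝ᵥ f = 0
    · exact ⟨g + g', by simp [add_dotProduct, *]⟩
    · exact ⟨g', hgd', hf, hgf'⟩
  · exact ⟨g, hgd, hgf, hf'⟩

theorem eq_sub_or_eq_sub_of_mem_span (hf : f ≠ 0) (h : f ∈ Submodule.span (ZMod 3) {q - p}) :
    f = q - p ∨ f = p - q := by
  obtain ⟨s, rfl⟩ := Submodule.mem_span_singleton.1 h
  rcases eq_or_eq_add_one_or_eq_sub_one 0 s with rfl | rfl | rfl
  · simp at hf
  · simp
  · simp

end ParaboloidSections

section Axes

variable {c f u v c' f' u' v' y p q : AG 4} {e i : ZMod 3} {S : Finset (AG 4)}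

theorem IsCap.mem_span_sub_or_mem_span_sub (hS : IsCap S) (he : e ≠ 0)
    (hA : hyperplaneSection S y (i + e) = paraboloid c f u v) (hA9 : #(paraboloid c f u v) = 9)
    (hB : hyperplaneSection S y (i - e) = paraboloid c' f' u' v')
    (hB9 : #(paraboloid c' f' u' v') = 9) (hf : y ⬝ᵥ f = 0)
    (hp : p ∈ hyperplaneSection S y i) (hq : q ∈ hyperplaneSection S y i) (hpq : p ≠ q) :
    f ∈ Submodule.span (ZMod 3) {q - p} ∨ f' ∈ Submodule.span (ZMod 3) {q - p} := by
  by_contra! h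
  obtain ⟨g, hg, hgf, hgf'⟩ := exists_dotProduct_eq_zero_and_ne_zero_and_ne_zero h.1 h.2
  obtain ⟨j, hj⟩ := exists_four_le_card_hyperplaneSection_paraboloid hA9 hgf
  obtain ⟨j', hj'⟩ := exists_four_le_card_hyperplaneSection_paraboloid hB9 hgf'
  have hdec : ∀ e s j j' : ZMod 3, e ≠ 0 → ∃ t, s + t * e ≠ j ∧ s - t * e ≠ j' := by decide
  obtain ⟨t, ht, ht'⟩ := hdec e (g ⬝ᵥ p) j j' he
  have hgy : g - t • y ≠ 0 := by
    intro h0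
    refine hgf ?_
    rw [sub_eq_zero.1 h0, smul_dotProduct, hf, smul_zero]
  set X := hyperplaneSection S (g - t • y) (g ⬝ᵥ p - t * i) with hX
  have hX9 : #X ≤ 9 := hS.card_hyperplaneSection_le (fun D => IsCap.card_le_nine) hgy _
  have hXj (k : ZMod 3) : hyperplaneSection X y (i + k) =
      hyperplaneSection (hyperplaneSection S y (i + k)) g (g ⬝ᵥ p + t * k) := by
    ext x
    simp only [hX, mem_hyperplaneSection, sub_dotProduct, smul_dotProduct, smul_eq_mul]
    grind
  have hXA : 4 ≤ #(hyperplaneSection X y (i + e)) := by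
    rw [hXj, hA]
    exact hj _ ht
  have hXB : 4 ≤ #(hyperplaneSection X y (i - e)) := by
    rw [sub_eq_add_neg, hXj, ← sub_eq_add_neg, hB, mul_neg, ← sub_eq_add_neg]
    exact hj' _ ht'
  have hXpq : {p, q} ⊆ hyperplaneSection X y i := by
    obtain ⟨hpS, hyp⟩ := mem_hyperplaneSection.1 hp
    obtain ⟨hqS, hyq⟩ := mem_hyperplaneSection.1 hq
    rw [dotProduct_sub, sub_eq_zero] at hg
    simp [insert_subset_iff, hX, sub_dotProduct, hpS, hqS, hyp, hyq, hg]
  have hX2 := (card_pair hpq).symm.trans_le (card_le_card hXpq)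
  have := card_eq_sum_card_hyperplaneSection X y i he
  omega

theorem IsCap.sub_mem_hyperplaneSection (hS : IsCap S) (hy : y ≠ 0) (he : e ≠ 0)
    (hA : hyperplaneSection S y (i + e) = paraboloid c f u v)
    (hfuv : LinearIndependent (ZMod 3) ![f, u, v]) (hc : y ⬝ᵥ c = i + e) (hf : y ⬝ᵥ f = 0)
    (hu : y ⬝ᵥ u = 0) (hv : y ⬝ᵥ v = 0) (hp : p ∈ hyperplaneSection S y i)
    (hq : q ∈ hyperplaneSection S y i) (hfpq : f = q - p ∨ f = p - q)
    {x : AG 4} (hx : x ∈ hyperplaneSection S y (i - e)) :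
    p + q - x ∈ hyperplaneSection S y (i + e) := by
  obtain ⟨hpS, hyp⟩ := mem_hyperplaneSection.1 hp
  obtain ⟨hqS, hyq⟩ := mem_hyperplaneSection.1 hq
  obtain ⟨hxS, hyx⟩ := mem_hyperplaneSection.1 hx
  obtain ⟨a, ha⟩ := exists_sum_smul_eq_of_dotProduct_eq_zero (x := p + q - x - c) hfuv
    (by simp [Fin.forall_fin_succ, hf, hu, hv]) hy
    (by simp [dotProduct_sub, dotProduct_add, hyp, hyq, hyx, hc])
  -- The other two points of the line through `p + q - x` in direction `f` are `-(p + x)` and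
  -- `-(q + x)`, so the point `z` where this line meets the paraboloid is `p + q - x` itself.
  obtain ⟨z, hz, k, hk⟩ : ∃ z ∈ paraboloid c f u v, ∃ k : ZMod 3, z = p + q - x + k • f := by
    refine ⟨_, mem_paraboloid.2 ⟨a 1, a 2, rfl⟩, a 1 ^ 2 + a 2 ^ 2 - a 0, ?_⟩
    simp only [Fin.sum_univ_three, Matrix.cons_val] at ha
    linear_combination (norm := module) ha
  have hzS : z ∈ S := (mem_hyperplaneSection.1 (hA ▸ hz)).1
  have hne {r : AG 4} (hyr : y ⬝ᵥ r = i) : r ≠ x := by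
    rintro rfl
    simp [hyx, he] at hyr
  have hzp : z ≠ -(p + x) := ne_of_mem_of_not_mem hzS (hS.neg_add_notMem hpS hxS (hne hyp))
  have hzq : z ≠ -(q + x) := ne_of_mem_of_not_mem hzS (hS.neg_add_notMem hqS hxS (hne hyq))
  suffices z = p + q - x by rwa [hA, ← this]
  have hp3 := add_add_self_eq_zero p
  have hq3 := add_add_self_eq_zero q
  clear * - hk hzp hzq hfpq hp3 hq3
  rcases eq_or_eq_add_one_or_eq_sub_one 0 k with rfl | rfl | rfl <;>
    simp only [zero_add, zero_sub, zero_smul, one_smul, neg_smul] at hk <;> grind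

theorem IsCap.exists_axis (hS : IsCap S) (hy : y ≠ 0) (he : e ≠ 0)
    (hA : #(hyperplaneSection S y (i + e)) = 9) (hB : #(hyperplaneSection S y (i - e)) = 9)
    (hp : p ∈ hyperplaneSection S y i) (hq : q ∈ hyperplaneSection S y i) (hpq : p ≠ q) :
    ∃ d, (d = e ∨ d = -e) ∧ ∃ c f u v, LinearIndependent (ZMod 3) ![f, u, v] ∧
      y ⬝ᵥ c = i + d ∧ y ⬝ᵥ f = 0 ∧ y ⬝ᵥ u = 0 ∧ y ⬝ᵥ v = 0 ∧
      hyperplaneSection S y (i + d) = paraboloid c f u v ∧ (f = q - p ∨ f = p - q) := by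
  obtain ⟨c, f, u, v, hfuv, hc, hf, hu, hv, hsec⟩ := hS.exists_hyperplaneSection_eq_paraboloid hy hA
  obtain ⟨c', f', u', v', hfuv', hc', hf', hu', hv', hsec'⟩ :=
    hS.exists_hyperplaneSection_eq_paraboloid hy hB
  rcases hS.mem_span_sub_or_mem_span_sub he hsec (hsec ▸ hA) hsec' (hsec' ▸ hB) hf hp hq hpq with
    hspan | hspan
  · exact ⟨e, Or.inl rfl, c, f, u, v, hfuv, hc, hf, hu, hv, hsec,
      eq_sub_or_eq_sub_of_mem_span (hfuv.ne_zero 0) hspan⟩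
  · rw [sub_eq_add_neg] at hc' hsec'
    exact ⟨-e, Or.inr rfl, c', f', u', v', hfuv', hc', hf', hu', hv', hsec',
      eq_sub_or_eq_sub_of_mem_span (hfuv'.ne_zero 0) hspan⟩

theorem IsCap.hyperplaneSection_eq_image_sub (hS : IsCap S) (hy : y ≠ 0) (he : e ≠ 0)
    (hA : #(hyperplaneSection S y (i + e)) = 9) (hB : #(hyperplaneSection S y (i - e)) = 9)
    (hp : p ∈ hyperplaneSection S y i) (hq : q ∈ hyperplaneSection S y i) (hpq : p ≠ q) :
    hyperplaneSection S y (i - e) = (hyperplaneSection S y (i + e)).image (p + q - ·) := by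
  have himage {A : Finset (AG 4)} : #(A.image (p + q - ·)) = #A :=
    card_image_of_injective _ fun _ _ => sub_right_injective.eq_iff.1
  obtain ⟨d, hd, c, f, u, v, hfuv, hc, hf, hu, hv, hsec, hfpq⟩ :=
    hS.exists_axis hy he hA hB hp hq hpq
  rcases hd with rfl | rfl
  · refine eq_of_subset_of_card_le (fun x hx => mem_image.2 ⟨p + q - x, ?_, sub_sub_cancel _ _⟩)
      (by rw [himage, hA, hB])
    exact hS.sub_mem_hyperplaneSection hy he hsec hfuv hc hf hu hv hp hq hfpq hx
  · refine (eq_of_subset_of_card_le (fun z hz => ?_) (by rw [himage, hA, hB])).symm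
    obtain ⟨x, hx, rfl⟩ := mem_image.1 hz
    rw [sub_eq_add_neg]
    exact hS.sub_mem_hyperplaneSection hy (neg_ne_zero.2 he) hsec hfuv hc hf hu hv hp hq hfpq
      (by rwa [sub_neg_eq_add])

theorem IsCap.card_hyperplaneSection_le_two (hS : IsCap S) (hy : y ≠ 0) (he : e ≠ 0)
    (hA : #(hyperplaneSection S y (i + e)) = 9) (hB : #(hyperplaneSection S y (i - e)) = 9) :
    #(hyperplaneSection S y i) ≤ 2 := by
  by_contra! h
  obtain ⟨p, hp, q, hq, r, hr, hpq, hpr, hqr⟩ := two_lt_card.1 h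
  have himage := (hS.hyperplaneSection_eq_image_sub hy he hA hB hp hq hpq).symm.trans
    (hS.hyperplaneSection_eq_image_sub hy he hA hB hp hr hpr)
  set A := hyperplaneSection S y (i + e)
  have htrans : ∀ x ∈ A, x + (q - r) ∈ A := by
    intro x hx
    obtain ⟨z, hz, hzx⟩ := mem_image.1 (himage ▸ mem_image_of_mem (p + r - ·) hx)
    convert hz using 1
    linear_combination hzx
  obtain ⟨a, ha⟩ : A.Nonempty := card_pos.1 (by omega)
  have hAcap : IsCap A := hS.subset (filter_subset _ _)
  refine hAcap.neg_add_notMem ha (htrans a ha) (by simpa [sub_eq_zero] using hqr) ?_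
  convert htrans _ (htrans a ha) using 1
  linear_combination -add_add_self_eq_zero a - add_add_self_eq_zero (q - r)

end Axes

/-- The paraboloid with vertex `b 0` and axis direction `b 1` over the directions `b 2` and `b 3`,
its image under `x ↦ -x`, and the two points `± b 1`. For a basis `b` of `AG(4,3)` this is the
normal form of a maximal cap with anchor zero. -/
def doubleParaboloid {n : ℕ} (b : Fin 4 → AG n) : Finset (AG n) :=
  {b 1, -b 1} ∪ (paraboloid (b 0) (b 1) (b 2) (b 3) ∪
    (paraboloid (b 0) (b 1) (b 2) (b 3)).image (-·))

section DoubleParaboloid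

variable {n m : ℕ}

theorem card_doubleParaboloid_le (b : Fin 4 → AG n) : #(doubleParaboloid b) ≤ 20 :=
  (card_union_le _ _).trans <| Nat.add_le_add card_le_two <| (card_union_le _ _).trans <|
    Nat.add_le_add (card_paraboloid_le ..) (card_image_le.trans (card_paraboloid_le ..))

theorem image_doubleParaboloid (L : AG n →ₗ[ZMod 3] AG m) (b : Fin 4 → AG n) :
    (doubleParaboloid b).image L = doubleParaboloid (L ∘ b) := by
  have himage (c f u v : AG n) : (paraboloid c f u v).image L =
      paraboloid (L c) (L f) (L u) (L v) := image_paraboloid L.toAffineMap c f u v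
  have hneg (A : Finset (AG n)) : (A.image (-·)).image L = (A.image L).image (-·) :=
    image_comm fun x => by simp
  simp only [doubleParaboloid, image_union, image_insert, image_singleton, map_neg, hneg, himage,
    Function.comp_apply]

theorem image_add_doubleParaboloid (a : AG n) (b : Fin 4 → AG n) :
    (doubleParaboloid b).image (a + ·) =
      {a + b 1, a - b 1} ∪ (paraboloid (a + b 0) (b 1) (b 2) (b 3) ∪
        (paraboloid (a + b 0) (b 1) (b 2) (b 3)).image (a + a - ·)) := by
  have himage : paraboloid (a + b 0) (b 1) (b 2) (b 3) =
      (paraboloid (b 0) (b 1) (b 2) (b 3)).image (a + ·) := by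
    simp only [paraboloid, image_image, Function.comp_def, add_assoc]
  have hneg : (a + a - ·) ∘ (a + ·) = fun x => a + -x := by
    funext x
    simp only [Function.comp_apply]
    abel
  rw [himage, image_image, hneg]
  simp only [doubleParaboloid, image_union, image_insert, image_singleton, image_image,
    Function.comp_def, sub_eq_add_neg]

theorem sum_doubleParaboloid (b : Fin 4 → AG n) : ∑ x ∈ doubleParaboloid b, x = 0 := by
  have hneg : (doubleParaboloid b).image (-·) = doubleParaboloid b := by
    simp only [doubleParaboloid, image_union, image_image, image_insert, image_singleton, neg_neg,
      Function.comp_def, image_id', pair_comm, union_comm]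
  have hsum : ∑ x ∈ doubleParaboloid b, x = -∑ x ∈ doubleParaboloid b, x := by
    conv_lhs => rw [← hneg, sum_image neg_injective.injOn, sum_neg_distrib]
  linear_combination add_add_self_eq_zero (∑ x ∈ doubleParaboloid b, x) - hsum

theorem isCap_doubleParaboloid_single :
    IsCap (doubleParaboloid fun i : Fin 4 => (Pi.single i 1 : AG 4)) := by
  unfold IsCap
  decide +kernel

theorem card_doubleParaboloid_single :
    #(doubleParaboloid fun i : Fin 4 => (Pi.single i 1 : AG 4)) = 20 := by
  decide +kernel

end DoubleParaboloid

section TwentyCaps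

theorem eq_union_hyperplaneSection {n : ℕ} (S : Finset (AG n)) (y : AG n) (i : ZMod 3)
    {e : ZMod 3} (he : e ≠ 0) :
    S = hyperplaneSection S y i ∪
      (hyperplaneSection S y (i + e) ∪ hyperplaneSection S y (i - e)) := by
  have hdec : ∀ e i j : ZMod 3, e ≠ 0 → j = i ∨ j = i + e ∨ j = i - e := by decide
  ext x
  simp only [mem_union, mem_hyperplaneSection, ← and_or_left, hdec e i _ he, and_true]

theorem IsCap.exists_sections_of_twenty_le_card {S : Finset (AG 4)} (hS : IsCap S) (h : 20 ≤ #S) :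
    ∃ y ≠ 0, ∃ i, #(hyperplaneSection S y i) = 2 ∧ #(hyperplaneSection S y (i + 1)) = 9 ∧
      #(hyperplaneSection S y (i - 1)) = 9 := by
  obtain ⟨U, hUS, hU⟩ := exists_subset_card_eq h
  obtain ⟨y, hy, i, hi, hi', hi''⟩ := (hS.subset hUS).exists_sections_two_nine_nine hU
  have hmono (j : ZMod 3) : #(hyperplaneSection U y j) ≤ #(hyperplaneSection S y j) :=
    card_le_card (filter_subset_filter _ hUS)
  have hle (j : ZMod 3) : #(hyperplaneSection S y j) ≤ 9 :=
    hS.card_hyperplaneSection_le (fun _ => IsCap.card_le_nine) hy j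
  have hadd := (hle (i + 1)).antisymm (hi' ▸ hmono _)
  have hsub := (hle (i - 1)).antisymm (hi'' ▸ hmono _)
  exact ⟨y, hy, i, (hS.card_hyperplaneSection_le_two hy one_ne_zero hadd hsub).antisymm
    (hi ▸ hmono i), hadd, hsub⟩

theorem pair_eq_midpoint_add_sub {n : ℕ} {p q m f : AG n} (hm : p + q = m + m)
    (hf : f = q - p ∨ f = p - q) : ({p, q} : Finset (AG n)) = {m + f, m - f} := by
  have hp : m + (q - p) = p := by
    linear_combination hm + add_add_self_eq_zero m - add_add_self_eq_zero p
  have hq : m + (p - q) = q := by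
    linear_combination hm + add_add_self_eq_zero m - add_add_self_eq_zero q
  rcases hf with rfl | rfl <;> rw [sub_eq_add_neg m, neg_sub, hp, hq]
  exact pair_comm p q

theorem IsCap.eq_image_doubleParaboloid {S : Finset (AG 4)} (hS : IsCap S) (h : 20 ≤ #S) :
    ∃ (b : Fin 4 → AG 4) (m : AG 4), LinearIndependent (ZMod 3) b ∧
      S = (doubleParaboloid b).image (m + ·) := by
  obtain ⟨y, hy, i, hi, hadd, hsub⟩ := hS.exists_sections_of_twenty_le_card h
  obtain ⟨p, q, hpq, hsec⟩ := card_eq_two.1 hi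
  have hp : p ∈ hyperplaneSection S y i := hsec ▸ mem_insert_self p {q}
  have hq : q ∈ hyperplaneSection S y i := hsec ▸ mem_insert_of_mem (mem_singleton_self q)
  obtain ⟨d, hd, c, f, u, v, hfuv, hc, hf, hu, hv, hA, hfpq⟩ :=
    hS.exists_axis hy one_ne_zero hadd hsub hp hq hpq
  have hd0 : d ≠ 0 := by rcases hd with rfl | rfl <;> decide
  have hcards : #(hyperplaneSection S y (i + d)) = 9 ∧ #(hyperplaneSection S y (i - d)) = 9 := by
    rcases hd with rfl | rfl
    · exact ⟨hadd, hsub⟩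
    · exact ⟨by rwa [← sub_eq_add_neg], by rwa [sub_neg_eq_add]⟩
  have himage := hS.hyperplaneSection_eq_image_sub hy hd0 hcards.1 hcards.2 hp hq hpq
  obtain ⟨m, hm⟩ : ∃ m, p + q = m + m :=
    ⟨-(p + q), by linear_combination add_add_self_eq_zero (p + q)⟩
  have hym : y ⬝ᵥ (c - m) ≠ 0 := by
    have hym := congrArg (y ⬝ᵥ ·) hm
    rw [dotProduct_add, (mem_hyperplaneSection.1 hp).2, (mem_hyperplaneSection.1 hq).2,
      dotProduct_add] at hym
    rw [dotProduct_sub, hc]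
    grind
  refine ⟨![c - m, f, u, v], m, linearIndependent_vecCons_of_dotProduct hfuv
    (by simp [Fin.forall_fin_succ, hf, hu, hv]) hym, ?_⟩
  rw [image_add_doubleParaboloid]
  simp only [Matrix.cons_val, add_sub_cancel]
  rw [eq_union_hyperplaneSection S y i hd0, hsec, himage, hA, hm,
    pair_eq_midpoint_add_sub hm hfpq]

theorem MaximalCap.exists_basis_eq_doubleParaboloid {S : Finset (AG 4)} (hS : MaximalCap S)
    (h : ∑ x ∈ S, x = 0) : ∃ b : Module.Basis (Fin 4) (ZMod 3) (AG 4), S = doubleParaboloid b := by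
  have hcard : 20 ≤ #S := card_doubleParaboloid_single ▸ hS.2 _ isCap_doubleParaboloid_single
  obtain ⟨b, m, hb, rfl⟩ := hS.1.eq_image_doubleParaboloid hcard
  have hm : m = 0 := by
    rw [card_image_of_injective _ (add_right_injective m)] at hcard
    rw [sum_image (add_right_injective m).injOn, sum_add_distrib, sum_doubleParaboloid, add_zero,
      sum_const, hcard.antisymm' (card_doubleParaboloid_le b)] at h
    linear_combination 7 * add_add_self_eq_zero m - h
  exact ⟨basisOfLinearIndependentOfCardEqFinrank hb (by simp), by simp [hm]⟩

end TwentyCaps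

/-- Any two maximal caps in `AG(4,3)` with anchor the zero vector (i.e. whose points sum
to zero) are linearly equivalent. -/
theorem maximal_caps_AG43_anchor_zero_linearly_equivalent
    (S T : Finset (Fin 4 → ZMod 3)) (hS : MaximalCap S) (hT : MaximalCap T)
    (haS : ∑ x ∈ S, x = 0) (haT : ∑ x ∈ T, x = 0) :
    ∃ L : (Fin 4 → ZMod 3) ≃ₗ[ZMod 3] (Fin 4 → ZMod 3),
      S.image (fun x => L x) = T := by
  obtain ⟨b, rfl⟩ := hS.exists_basis_eq_doubleParaboloid haS
  obtain ⟨b', rfl⟩ := hT.exists_basis_eq_doubleParaboloid haT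
  refine ⟨b.equiv b' (Equiv.refl _), ?_⟩
  have hb : b.equiv b' (Equiv.refl _) ∘ b = b' := funext fun i => b.equiv_apply i b' (Equiv.refl _)
  rw [← hb]
  exact image_doubleParaboloid (b.equiv b' (Equiv.refl _)).toLinearMap b
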